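/- arXiv:1612.09415 — 3 statements merged into one kernel-verified Lean document; each statement's English description precedes it below -/
import Mathlib

section
/- Let Y and Y* be independent, identically distributed random vectors in ℝⁿ on a common probability space, let S be a finite nonempty index set, and for each s ∈ S let θ̂_s : ℝⁿ → ℝⁿ be measurable and Êrr_s : ℝⁿ → ℝ be integrable with E[Êrr_s(Y)] = E‖Y* − θ̂_s(Y)‖₂² for every s ∈ S (unbiasedness of SURE). Let ŝ : ℝⁿ → S be a measurable selection satisfying Êrr_{ŝ(y)}(y) ≤ Êrr_t(y) for all y ∈ ℝⁿ and t ∈ S, and let s₀ ∈ S minimize s ↦ E‖Y* − θ̂_s(Y)‖₂² over S. Assume E‖Y* − θ̂_{ŝ(Y)}(Y)‖₂² is finite. Then E‖Y* − θ̂_{ŝ(Y)}(Y)‖₂² ≤ E‖Y* − θ̂_{s₀}(Y)‖₂² + ExOpt, where ExOpt = E‖Y* − θ̂_{ŝ(Y)}(Y)‖₂² − E[Êrr_{ŝ(Y)}(Y)] is the excess optimism; equivalently, E[Êrr_{ŝ(Y)}(Y)] ≤ min_{s ∈ S} E‖Y* − θ̂_s(Y)‖₂². -/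
open MeasureTheory ProbabilityTheory

/-!
The pointwise minimum `Êrr_{ŝ(y)}(y) = min_s Êrr_s(y)` lies below each `Êrr_t(y)`, so taking
expectations and using unbiasedness gives `E[Êrr_{ŝ(Y)}(Y)] ≤ Err(θ̂_t)` for every `t`; the bound
on `Err(θ̂_ŝ)` is the case `t = s₀`, rearranged. Monotonicity of the Bochner integral needs
`Êrr_{ŝ(Y)}(Y)` to be integrable, which holds because it is a minimum of finitely many integrable
functions (the σ-algebra on `S` may be too coarse to get this from measurability of `ŝ`).
-/

/-- Oracle bound via excess optimism.  If `Y, Y*` are i.i.d. random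
vectors in `ℝⁿ`, `{θ̂_s : s ∈ S}` is a finite family of estimators, `Êrr_s` is an
unbiased estimator of the prediction error `Err(θ̂_s) = E‖Y* − θ̂_s(Y)‖²`, `ŝ`
minimizes `Êrr` pointwise, and `s₀` minimizes the true prediction error, then
`Err(θ̂_ŝ) ≤ Err(θ̂_{s₀}) + ExOpt` where
`ExOpt = Err(θ̂_ŝ) − E[Êrr_{ŝ(Y)}(Y)]`; equivalently
`E[Êrr_{ŝ(Y)}(Y)] ≤ min_{s ∈ S} Err(θ̂_s)`. -/
theorem excess_optimism_oracle_bound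
    {Ω : Type*} [MeasurableSpace Ω] (P : Measure Ω) [IsProbabilityMeasure P]
    {n : ℕ} (Y Ystar : Ω → EuclideanSpace ℝ (Fin n))
    (hY : Measurable Y) (hYstar : Measurable Ystar)
    (hindep : IndepFun Y Ystar P)
    (hid : Measure.map Y P = Measure.map Ystar P)
    {S : Type*} [Fintype S] [Nonempty S] [MeasurableSpace S]
    (θhat : S → EuclideanSpace ℝ (Fin n) → EuclideanSpace ℝ (Fin n))
    (hθhat : ∀ s, Measurable (θhat s))
    (Errhat : S → EuclideanSpace ℝ (Fin n) → ℝ)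
    (hErrhatInt : ∀ s, Integrable (fun ω => Errhat s (Y ω)) P)
    (hUnbiased : ∀ s,
      ∫ ω, Errhat s (Y ω) ∂P = ∫ ω, ‖Ystar ω - θhat s (Y ω)‖ ^ 2 ∂P)
    (shat : EuclideanSpace ℝ (Fin n) → S) (hshat : Measurable shat)
    (hshatMin : ∀ y t, Errhat (shat y) y ≤ Errhat t y)
    (s0 : S)
    (hs0 : ∀ t, ∫ ω, ‖Ystar ω - θhat s0 (Y ω)‖ ^ 2 ∂P ≤
      ∫ ω, ‖Ystar ω - θhat t (Y ω)‖ ^ 2 ∂P)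
    (hfin : Integrable (fun ω => ‖Ystar ω - θhat (shat (Y ω)) (Y ω)‖ ^ 2) P) :
    ((∫ ω, ‖Ystar ω - θhat (shat (Y ω)) (Y ω)‖ ^ 2 ∂P) ≤
      (∫ ω, ‖Ystar ω - θhat s0 (Y ω)‖ ^ 2 ∂P) +
        ((∫ ω, ‖Ystar ω - θhat (shat (Y ω)) (Y ω)‖ ^ 2 ∂P) -
          ∫ ω, Errhat (shat (Y ω)) (Y ω) ∂P)) ∧
    ∀ t, (∫ ω, Errhat (shat (Y ω)) (Y ω) ∂P) ≤
      ∫ ω, ‖Ystar ω - θhat t (Y ω)‖ ^ 2 ∂P := by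
  have hint : Integrable (fun ω => Errhat (shat (Y ω)) (Y ω)) P := by
    have heq : (fun ω => Errhat (shat (Y ω)) (Y ω)) =
        Finset.univ.inf' Finset.univ_nonempty (fun s ω => Errhat s (Y ω)) := by
      funext ω
      rw [Finset.inf'_apply]
      exact le_antisymm (Finset.le_inf' _ _ fun t _ => hshatMin (Y ω) t)
        (Finset.inf'_le (fun s => Errhat s (Y ω)) (Finset.mem_univ (shat (Y ω))))
    rw [heq]
    exact Finset.inf'_induction (p := fun f : Ω → ℝ => Integrable f P) _ _
      (fun _ hf _ hg => hf.inf hg) fun s _ => hErrhatInt s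
  have key : ∀ t, (∫ ω, Errhat (shat (Y ω)) (Y ω) ∂P) ≤
      ∫ ω, ‖Ystar ω - θhat t (Y ω)‖ ^ 2 ∂P := fun t => by
    rw [← hUnbiased t]
    exact integral_mono hint (hErrhatInt t) fun ω => hshatMin (Y ω) t
  exact ⟨by linarith [key s0], key⟩
end

section
/- Fix σ² > 0 and y ∈ ℝⁿ, and for s ≥ 0 define the SURE criterion of the soft-thresholding estimator by Êrr_s(y) = Σ_{i=1}^n min{y_i², s²} + 2σ²·#{i : |y_i| > s}. Then there exists s* ∈ {0, |y_1|, …, |y_n|} such that Êrr_{s*}(y) ≤ Êrr_s(y) for all s ≥ 0; that is, the SURE criterion for soft-thresholding is minimized over s ≥ 0 at zero or at one of the absolute data values. -/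
/-!
On an interval between consecutive elements of `{0, |y₁|, …, |yₙ|}`, closed on the left, the
count `#{i : |yᵢ| > s}` is constant, while the training error is nondecreasing in `s ≥ 0`.
Hence moving any `s ≥ 0` down to the largest element of this finite set not exceeding `s` does
not increase the criterion, and a minimizer over the finite set is a global minimizer.
-/

/-- The SURE criterion for soft-thresholding,
`Êrr_s(y) = Σᵢ min{yᵢ², s²} + 2σ²·#{i : |yᵢ| > s}`, is minimized over `s ≥ 0` at
zero or at one of the absolute data values `|yᵢ|`. -/
theorem sure_soft_thresholding_minimized_at_data_value
    {n : ℕ} (σ2 : ℝ) (hσ2 : 0 < σ2) (y : Fin n → ℝ)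
    (Errhat : ℝ → ℝ)
    (hErrhat : ∀ s, Errhat s =
      (∑ i : Fin n, min ((y i) ^ 2) (s ^ 2)) +
        2 * σ2 * ((Finset.univ.filter (fun i : Fin n => s < |y i|)).card : ℝ)) :
    ∃ sstar : ℝ, (sstar = 0 ∨ ∃ i : Fin n, sstar = |y i|) ∧
      ∀ s : ℝ, 0 ≤ s → Errhat sstar ≤ Errhat s := by
  classical
  let T : Finset ℝ := insert 0 (Finset.univ.image fun i => |y i|)
  have mem_T : ∀ t, t ∈ T ↔ t = 0 ∨ ∃ i, t = |y i| := by
    intro t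
    simp [T, eq_comm]
  obtain ⟨a, haT, ha⟩ := T.exists_min_image Errhat ⟨0, (mem_T 0).2 (Or.inl rfl)⟩
  refine ⟨a, (mem_T a).1 haT, fun s hs => ?_⟩
  -- `t` is the largest candidate not exceeding `s`.
  obtain ⟨t, ht, htmax⟩ := (T.filter (· ≤ s)).exists_max_image id
    ⟨0, Finset.mem_filter.2 ⟨(mem_T 0).2 (Or.inl rfl), hs⟩⟩
  obtain ⟨htT, hts⟩ := Finset.mem_filter.1 ht
  have ht0 : 0 ≤ t := htmax 0 (Finset.mem_filter.2 ⟨(mem_T 0).2 (Or.inl rfl), hs⟩)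
  refine (ha t htT).trans ?_
  have hcount : (Finset.univ.filter fun i : Fin n => t < |y i|) =
      Finset.univ.filter fun i : Fin n => s < |y i| := by
    refine Finset.filter_congr fun i _ => ⟨fun h => ?_, hts.trans_lt⟩
    by_contra! hle
    exact h.not_ge (htmax _ (Finset.mem_filter.2 ⟨(mem_T _).2 (Or.inr ⟨i, rfl⟩), hle⟩))
  rw [hErrhat, hErrhat, hcount]
  gcongr
end

section
/- The series Σ_{d=1}^∞ 2·(1 + 1/d)·d^{d/2}·e^{−d} / Γ(d/2) converges and its sum is strictly less than 10. Equivalently, Σ_{d=1}^∞ √(2d)·(1 + 1/d)·Λ_d < 10, where Λ_d = (2d)^{(d−1)/2}·e^{−d} / (2^{d/2−1}·Γ(d/2)) is the d-dimensional Gaussian surface area of the ball of radius √(2d) centered at the origin. -/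
/-!
The bound is numerically tight to within a few percent, so the first terms are estimated
explicitly and the tail geometrically. Write `f d` for the `d`-th term. From
`Γ (x + 1) = x Γ x` and `log (1 + y) ≤ (y + y / (1 + y)) / 2` (which is `u ≤ sinh u` for
`u = log (1 + y)`) one gets `f (d + 2) ≤ 2 * exp (1 / d - 1) * f d`, and the factor is below `4 / 5`
as soon as `d ≥ 13` (`nullTerm_add_two_le`). Hence the quantity
`f 1 + ⋯ + f n + 5 * (f (n + 1) + f (n + 2))` is nonincreasing for `n ≥ 12`, and its value at
`n = 12` bounds every partial sum. That value is at most `9.91`: at integers and half-integers the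
Gamma function is explicit (`nullTerm_even`, `nullTerm_odd_le`), and rational bounds on `exp (-1)`,
`π` and the square roots of the odd numbers up to `13` finish the computation.
-/

/-- The `d`-th term `2 (1 + 1/d) d^{d/2} e^{-d} / Γ(d/2)` of the series. -/
noncomputable def nullTerm (d : ℕ) : ℝ :=
  2 * (1 + 1 / (d : ℝ)) * (d : ℝ) ^ ((d : ℝ) / 2) *
      Real.exp (-(d : ℝ)) / Real.Gamma ((d : ℝ) / 2)

lemma nullTerm_nonneg (d : ℕ) : 0 ≤ nullTerm d := by
  unfold nullTerm
  have : 0 ≤ Real.Gamma ((d : ℝ) / 2) := Real.Gamma_nonneg_of_nonneg (by positivity)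
  positivity

lemma exp_neg_one_le : Real.exp (-1) ≤ 0.36788 := by
  have := Real.exp_neg_one_lt_d9
  linarith

lemma exp_neg_natCast_le (d : ℕ) : Real.exp (-(d : ℝ)) ≤ 0.36788 ^ d := by
  have h : Real.exp (-(d : ℝ)) = Real.exp (-1) ^ d := by
    rw [← Real.exp_nat_mul]; congr 1; ring
  rw [h]
  exact pow_le_pow_left₀ (Real.exp_pos _).le exp_neg_one_le d

/-- A sharpening of `log (1 + y) ≤ y` that is exact to second order at `y = 0`. -/
lemma log_one_add_le_half {y : ℝ} (hy : 0 ≤ y) :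
    Real.log (1 + y) ≤ (y + y / (1 + y)) / 2 := by
  have h1 : (0 : ℝ) < 1 + y := by linarith
  have h : Real.log (1 + y) ≤ Real.sinh (Real.log (1 + y)) :=
    Real.self_le_sinh_iff.2 (Real.log_nonneg (by linarith))
  rw [Real.sinh_log h1] at h
  convert h using 2
  field_simp
  ring

/-- The quotient `(d + 2)^{(d + 2)/2} / d^{d/2 + 1} = (1 + 2/d)^{d/2 + 1}` exceeds its limit `e`
by a factor of at most `e^{1/d}`. -/
lemma add_two_rpow_le {d : ℝ} (hd : 0 < d) :
    (d + 2) ^ ((d + 2) / 2) ≤ d ^ (d / 2) * d * Real.exp (1 + 1 / d) := by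
  have hy : 0 ≤ 2 / d := by positivity
  have e1 : d + 2 = d * (1 + 2 / d) := by field_simp
  have e2 : (d + 2) / 2 = d / 2 + 1 := by ring
  have h1 : (d + 2) ^ ((d + 2) / 2) = d ^ (d / 2) * d * (1 + 2 / d) ^ (d / 2 + 1) := by
    rw [e2, e1, Real.mul_rpow hd.le (by positivity), Real.rpow_add_one hd.ne']
  rw [h1]
  gcongr
  rw [Real.rpow_def_of_pos (by positivity)]
  gcongr
  calc Real.log (1 + 2 / d) * (d / 2 + 1)
      ≤ ((2 / d + 2 / d / (1 + 2 / d)) / 2) * (d / 2 + 1) := by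
        gcongr; exact log_one_add_le_half hy
    _ = 1 + 1 / d := by field_simp; ring

lemma two_mul_exp_le {d : ℝ} (hd : 13 ≤ d) : 2 * Real.exp (1 / d - 1) ≤ 4 / 5 := by
  have h1 : Real.exp (1 / d - 1) ≤ Real.exp (-(12 / 13)) := by
    gcongr
    have : 1 / d ≤ 1 / 13 := by gcongr
    linarith
  have h2 : Real.exp (-(12 / 13)) ≤ 2 / 5 := by
    -- compare thirteenth powers, where the left side becomes `exp (-12)`
    refine le_of_pow_le_pow_left₀ (n := 13) (by norm_num) (by norm_num) ?_
    rw [← Real.exp_nat_mul]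
    have h3 := exp_neg_natCast_le 12
    have e : ((13 : ℕ) : ℝ) * (-(12 / 13)) = -((12 : ℕ) : ℝ) := by norm_num
    rw [e]
    exact h3.trans (by norm_num)
  linarith

lemma nullTerm_add_two_le {d : ℕ} (hd : 13 ≤ d) :
    nullTerm (d + 2) ≤ 4 / 5 * nullTerm d := by
  have hd' : (13 : ℝ) ≤ d := by exact_mod_cast hd
  have h0 : (0 : ℝ) < d := by linarith
  have hG : 0 < Real.Gamma ((d : ℝ) / 2) := Real.Gamma_pos_of_pos (by positivity)
  have hG2 : Real.Gamma (((d : ℝ) + 2) / 2) = (d : ℝ) / 2 * Real.Gamma ((d : ℝ) / 2) := by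
    rw [← Real.Gamma_add_one (by positivity)]; congr 1; ring
  have hexp : Real.exp (1 + 1 / (d : ℝ)) * Real.exp (-((d : ℝ) + 2)) =
      Real.exp (1 / (d : ℝ) - 1) * Real.exp (-(d : ℝ)) := by
    rw [← Real.exp_add, ← Real.exp_add]; congr 1; ring
  have hfac : 1 + 1 / ((d : ℝ) + 2) ≤ 1 + 1 / (d : ℝ) := by gcongr; linarith
  unfold nullTerm
  push_cast
  rw [hG2]
  calc 2 * (1 + 1 / ((d : ℝ) + 2)) * ((d : ℝ) + 2) ^ (((d : ℝ) + 2) / 2) *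
        Real.exp (-((d : ℝ) + 2)) / ((d : ℝ) / 2 * Real.Gamma ((d : ℝ) / 2))
      ≤ 2 * (1 + 1 / (d : ℝ)) *
          ((d : ℝ) ^ ((d : ℝ) / 2) * d * Real.exp (1 + 1 / (d : ℝ))) *
        Real.exp (-((d : ℝ) + 2)) / ((d : ℝ) / 2 * Real.Gamma ((d : ℝ) / 2)) := by
        gcongr
        exact add_two_rpow_le h0
    _ = 2 * (1 + 1 / (d : ℝ)) * ((d : ℝ) ^ ((d : ℝ) / 2) * d) *
          (Real.exp (1 + 1 / (d : ℝ)) * Real.exp (-((d : ℝ) + 2))) /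
          ((d : ℝ) / 2 * Real.Gamma ((d : ℝ) / 2)) := by ring
    _ = (2 * Real.exp (1 / (d : ℝ) - 1)) * (2 * (1 + 1 / (d : ℝ)) * (d : ℝ) ^ ((d : ℝ) / 2) *
          Real.exp (-(d : ℝ)) / Real.Gamma ((d : ℝ) / 2)) := by
        rw [hexp]; field_simp
    _ ≤ _ := by
        gcongr
        exact two_mul_exp_le hd'

lemma nullTerm_even (k : ℕ) :
    nullTerm (2 * k + 2) = 2 * (1 + 1 / (2 * k + 2 : ℝ)) * (2 * k + 2 : ℝ) ^ (k + 1) *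
      Real.exp (-((2 * k + 2 : ℕ) : ℝ)) / (k.factorial : ℝ) := by
  have e : ((2 * k + 2 : ℕ) : ℝ) / 2 = (k : ℝ) + 1 := by push_cast; ring
  unfold nullTerm
  rw [e, Real.Gamma_nat_eq_factorial, ← Nat.cast_add_one k, Real.rpow_natCast]
  push_cast
  rfl

lemma nullTerm_even_le (k : ℕ) :
    nullTerm (2 * k + 2) ≤ 2 * (1 + 1 / (2 * k + 2 : ℝ)) * (2 * k + 2 : ℝ) ^ (k + 1) *
      0.36788 ^ (2 * k + 2) / (k.factorial : ℝ) := by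
  rw [nullTerm_even]
  gcongr
  exact exp_neg_natCast_le _

lemma sqrt_pi_ge : (1.7724 : ℝ) ≤ Real.sqrt Real.pi := by
  apply Real.le_sqrt_of_sq_le
  have := Real.pi_gt_d6
  norm_num at *
  linarith

/-- Here `s` is any upper bound for `√(2k + 1)`, and `1.7724` is a lower bound for `√π`. -/
lemma nullTerm_odd_le (k : ℕ) (s : ℝ) (hs : 0 ≤ s) (hs2 : (2 * k + 1 : ℝ) ≤ s ^ 2) :
    nullTerm (2 * k + 1) ≤ 2 * (1 + 1 / (2 * k + 1 : ℝ)) * ((2 * k + 1 : ℝ) ^ k * s) *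
      0.36788 ^ (2 * k + 1) / (((2 * k - 1).doubleFactorial : ℝ) * 1.7724 / 2 ^ k) := by
  have e : ((2 * k + 1 : ℕ) : ℝ) / 2 = (k : ℝ) + 1 / 2 := by push_cast; ring
  have hdf : (0 : ℝ) < ((2 * k - 1).doubleFactorial : ℝ) := by
    exact_mod_cast Nat.doubleFactorial_pos _
  have hx : ((2 * k + 1 : ℕ) : ℝ) = 2 * (k : ℝ) + 1 := by push_cast; ring
  unfold nullTerm
  rw [e, Real.Gamma_nat_add_half, Real.rpow_add (by positivity), Real.rpow_natCast,
    ← Real.sqrt_eq_rpow]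
  gcongr
  · rw [hx]
  · rw [hx]
  · rw [hx]; exact Real.sqrt_le_iff.2 ⟨hs, hs2⟩
  · exact exp_neg_natCast_le _
  · exact sqrt_pi_ge

lemma nullTerm_head :
    ∑ i ∈ Finset.range 12, nullTerm (i + 1) + 5 * (nullTerm 13 + nullTerm 14) ≤ 9.91 := by
  have h1 := nullTerm_odd_le 0 1 (by norm_num) (by norm_num)
  have h2 := nullTerm_even_le 0
  have h3 := nullTerm_odd_le 1 1.7321 (by norm_num) (by norm_num)
  have h4 := nullTerm_even_le 1
  have h5 := nullTerm_odd_le 2 2.2361 (by norm_num) (by norm_num)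
  have h6 := nullTerm_even_le 2
  have h7 := nullTerm_odd_le 3 2.6458 (by norm_num) (by norm_num)
  have h8 := nullTerm_even_le 3
  have h9 := nullTerm_odd_le 4 3 (by norm_num) (by norm_num)
  have h10 := nullTerm_even_le 4
  have h11 := nullTerm_odd_le 5 3.3167 (by norm_num) (by norm_num)
  have h12 := nullTerm_even_le 5
  have h13 := nullTerm_odd_le 6 3.6056 (by norm_num) (by norm_num)
  have h14 := nullTerm_even_le 6
  norm_num [Nat.doubleFactorial, Nat.factorial] at h1 h2 h3 h4 h5 h6 h7 h8 h9 h10 h11 h12 h13 h14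
  simp only [Finset.sum_range_succ, Finset.sum_range_zero]
  norm_num
  linarith

lemma sum_range_nullTerm_le (n : ℕ) :
    ∑ i ∈ Finset.range n, nullTerm (i + 1) ≤ 9.91 := by
  -- `5 = 1 / (1 - 4 / 5)` makes this potential nonincreasing in `m`.
  have key : ∀ m : ℕ, ∑ i ∈ Finset.range (12 + m), nullTerm (i + 1) +
      5 * (nullTerm (12 + m + 1) + nullTerm (12 + m + 2)) ≤ 9.91 := by
    intro m
    induction m with
    | zero => exact nullTerm_head
    | succ m ih =>
      have h : nullTerm (12 + m + 1 + 2) ≤ 4 / 5 * nullTerm (12 + m + 1) :=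
        nullTerm_add_two_le (by omega)
      rw [← add_assoc, Finset.sum_range_succ]
      rw [show 12 + m + 1 + 1 = 12 + m + 2 from rfl]
      linarith
  have hmono : ∑ i ∈ Finset.range n, nullTerm (i + 1) ≤
      ∑ i ∈ Finset.range (12 + n), nullTerm (i + 1) :=
    Finset.sum_le_sum_of_subset_of_nonneg (Finset.range_mono (by omega))
      fun i _ _ => nullTerm_nonneg _
  have h1 := nullTerm_nonneg (12 + n + 1)
  have h2 := nullTerm_nonneg (12 + n + 2)
  linarith [key n]

lemma two_mul_rpow_eq_sqrt_mul {x : ℝ} (hx : 0 < x) :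
    2 * x ^ (x / 2) = Real.sqrt (2 * x) * (2 * x) ^ ((x - 1) / 2) / 2 ^ (x / 2 - 1) := by
  have h2x : 0 < 2 * x := by positivity
  rw [Real.sqrt_eq_rpow, ← Real.rpow_add h2x, show 1 / 2 + (x - 1) / 2 = x / 2 by ring,
    Real.mul_rpow (by norm_num) hx.le, Real.rpow_sub_one (by norm_num)]
  have : (0 : ℝ) < 2 ^ (x / 2) := by positivity
  field_simp


/-- The series `Σ_{d=1}^∞ 2·(1 + 1/d)·d^{d/2}·e^{−d}/Γ(d/2)`
converges and its sum is strictly less than `10`.  Each term equals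
`√(2d)·(1 + 1/d)·Λ_d`, where `Λ_d = (2d)^{(d−1)/2}·e^{−d}/(2^{d/2−1}·Γ(d/2))` is the
`d`-dimensional Gaussian surface area (Ball's formula) of the origin-centered ball of
radius `√(2d)`. -/
theorem nested_subset_regression_null_series_bound
    (F : ℕ → ℝ)
    (hF : ∀ d : ℕ, F d = 2 * (1 + 1 / (d : ℝ)) * (d : ℝ) ^ ((d : ℝ) / 2) *
      Real.exp (-(d : ℝ)) / Real.Gamma ((d : ℝ) / 2)) :
    Summable (fun d : ℕ => F (d + 1)) ∧
    (∑' d : ℕ, F (d + 1)) < 10 ∧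
    ∀ d : ℕ, 1 ≤ d →
      F d = Real.sqrt (2 * d) * (1 + 1 / (d : ℝ)) *
        ((2 * (d : ℝ)) ^ (((d : ℝ) - 1) / 2) * Real.exp (-(d : ℝ)) /
          (2 ^ ((d : ℝ) / 2 - 1) * Real.Gamma ((d : ℝ) / 2))) := by
  obtain rfl : F = nullTerm := funext hF
  have hnn : ∀ d : ℕ, 0 ≤ nullTerm (d + 1) := fun d => nullTerm_nonneg _
  refine ⟨summable_of_sum_range_le hnn sum_range_nullTerm_le, ?_, ?_⟩
  · exact (Real.tsum_le_of_sum_range_le hnn sum_range_nullTerm_le).trans_lt (by norm_num)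
  · intro d hd
    have hx : (0 : ℝ) < d := by exact_mod_cast hd
    calc nullTerm d = (2 * (d : ℝ) ^ ((d : ℝ) / 2)) * (1 + 1 / (d : ℝ)) *
          Real.exp (-(d : ℝ)) / Real.Gamma ((d : ℝ) / 2) := by unfold nullTerm; ring
      _ = _ := by rw [two_mul_rpow_eq_sqrt_mul hx, ← div_div]; ring
end
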